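/- Let G be an abelian group, X a compact Hausdorff topological space, and θ = ({X_t}_{t∈G}, {h_t}_{t∈G}) a topological partial action of G on X such that each X_t is clopen. Let α be the induced partial action of G on C(X) and R = C(X) ⋆_α G. If R is simple (its only two-sided ideals are {0} and R), then θ is topologically free. -/

import Mathlib

/-- A partial action `θ = ({X_t}, {h_t})` of a group `G` on a set `X`: subsets
`Xt t ⊆ X` and bijections `h t : Xt t⁻¹ → Xt t` (encoded as globally defined maps
whose values only matter on `Xt t⁻¹`). -/
structure SetPartialAction (G : Type*) [Group G] (X : Type*) where
  Xt : G → Set X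
  h : G → X → X
  h_mem : ∀ t, ∀ x ∈ Xt t⁻¹, h t x ∈ Xt t
  Xt_one : Xt 1 = Set.univ
  h_one : ∀ x, h 1 x = x
  h_left_inv : ∀ t, ∀ x ∈ Xt t⁻¹, h t⁻¹ (h t x) = x
  h_image : ∀ t s, h t '' (Xt t⁻¹ ∩ Xt s) = Xt t ∩ Xt (t * s)
  h_comp : ∀ t s, ∀ x ∈ Xt s⁻¹, x ∈ Xt (s⁻¹ * t⁻¹) → h t (h s x) = h (t * s) x

/-- A topological partial action of `G` on a topological space `X` in which every
`Xt t` is clopen: the maps `h t : Xt t⁻¹ → Xt t` are homeomorphisms, i.e.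
continuous on their domains (continuity of the inverse `h t⁻¹` on `Xt t` is an
instance of the same field at `t⁻¹`). -/
structure TopPartialAction (G : Type*) [Group G] (X : Type*) [TopologicalSpace X]
    extends SetPartialAction G X where
  clopen : ∀ t, IsClopen (Xt t)
  h_cont : ∀ t, ContinuousOn (h t) (Xt t⁻¹)

namespace SetPartialAction

variable {G : Type*} [Group G] {X : Type*}

/-- A subset `V ⊆ X` is `G`-invariant if `h t (V ∩ Xt t⁻¹) ⊆ V` for all `t`. -/
def Invariant (θ : SetPartialAction G X) (V : Set X) : Prop :=
  ∀ t : G, θ.h t '' (V ∩ θ.Xt t⁻¹) ⊆ V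

end SetPartialAction

namespace TopPartialAction

variable {G : Type*} [Group G] {X : Type*} [TopologicalSpace X]

/-- `θ` is minimal if `∅` and `X` are the only open `G`-invariant subsets of `X`. -/
def Minimal (θ : TopPartialAction G X) : Prop :=
  ∀ V : Set X, IsOpen V → θ.toSetPartialAction.Invariant V → V = ∅ ∨ V = Set.univ

/-- `θ` is topologically free if for every `t ≠ 1` the set
`F_t = {x ∈ Xt t⁻¹ : h t x = x}` has empty interior. -/
def TopologicallyFree (θ : TopPartialAction G X) : Prop :=
  ∀ t : G, t ≠ 1 → interior {x ∈ θ.Xt t⁻¹ | θ.h t x = x} = ∅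

/-- The ideal `D t = C(X_t) = {f ∈ C(X) : f = 0 off X_t}` of `C(X) = C(X, ℂ)`,
as an additive subgroup. -/
noncomputable def DC (θ : TopPartialAction G X) (t : G) : AddSubgroup C(X, ℂ) where
  carrier := {f : C(X, ℂ) | ∀ x ∉ θ.Xt t, f x = 0}
  zero_mem' := by intro x _; simp
  add_mem' := by intro f g hf hg x hx; simp [hf x hx, hg x hx]
  neg_mem' := by intro f hf x hx; simp [hf x hx]

open Classical in
/-- The induced map `α t : C(X) → C(X)`, `α t f = f ∘ h t⁻¹` on `Xt t`, extended by
zero off `Xt t` (continuous since `Xt t` is clopen). -/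
noncomputable def amapC (θ : TopPartialAction G X) (t : G) (f : C(X, ℂ)) : C(X, ℂ) :=
  ⟨fun x => if x ∈ θ.Xt t then f (θ.h t⁻¹ x) else 0, by
    rw [continuous_iff_continuousAt]
    intro x
    by_cases hx : x ∈ θ.Xt t
    · have hopen : IsOpen (θ.Xt t) := (θ.clopen t).isOpen
      have hc : ContinuousOn (fun y => f (θ.h t⁻¹ y)) (θ.Xt t) := by
        apply f.continuous.comp_continuousOn
        have h1 := θ.h_cont t⁻¹
        rwa [inv_inv] at h1
      have hca := hc.continuousAt (hopen.mem_nhds hx)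
      apply hca.congr
      filter_upwards [hopen.mem_nhds hx] with y hy
      simp [hy]
    · have hopen : IsOpen (θ.Xt t)ᶜ := (θ.clopen t).compl.isOpen
      have hca : ContinuousAt (fun _ : X => (0 : ℂ)) x := continuousAt_const
      apply hca.congr
      filter_upwards [hopen.mem_nhds hx] with y hy
      simp only [Set.mem_compl_iff] at hy
      simp [hy]⟩

/-- An ideal `I ⊆ C(X)` is `G`-invariant: `α t (I ∩ D t⁻¹) ⊆ I ∩ D t`. -/
def GInvariantC (θ : TopPartialAction G X) (I : Ideal C(X, ℂ)) : Prop :=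
  ∀ t : G, ∀ f ∈ I, f ∈ θ.DC t⁻¹ → θ.amapC t f ∈ I ∧ θ.amapC t f ∈ θ.DC t

/-- The underlying additive group of the partial skew group ring `C(X) ⋆_α G`. -/
abbrev SkewC (θ : TopPartialAction G X) : Type _ := Π₀ t : G, ↥(θ.DC t)

/-- The element `f δ_t` for `f ∈ D t`. -/
noncomputable def deltaC [DecidableEq G] (θ : TopPartialAction G X) (t : G)
    (f : C(X, ℂ)) (hf : f ∈ θ.DC t) : θ.SkewC :=
  DFinsupp.single t ⟨f, hf⟩

/-- The element `f δ_0` for arbitrary `f ∈ C(X) = D 1`. -/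
noncomputable def deltaC0 [DecidableEq G] (θ : TopPartialAction G X) (f : C(X, ℂ)) :
    θ.SkewC :=
  θ.deltaC 1 f (by intro x hx; rw [θ.Xt_one] at hx; exact absurd (Set.mem_univ x) hx)

end TopPartialAction

/-- The multiplication of `C(X) ⋆_α G`, *assumed* to exist, to be biadditive,
associative and to satisfy `(f δ_t)(g δ_s) = α_t(α_{t⁻¹}(f) g) δ_{ts}`. -/
structure CSkewMul {G : Type*} [Group G] [DecidableEq G] {X : Type*}
    [TopologicalSpace X] (θ : TopPartialAction G X) where
  mul : θ.SkewC → θ.SkewC → θ.SkewC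
  left_distrib : ∀ x y z, mul x (y + z) = mul x y + mul x z
  right_distrib : ∀ x y z, mul (x + y) z = mul x z + mul y z
  mul_single : ∀ (t s : G) (a : C(X, ℂ)) (ha : a ∈ θ.DC t)
      (b : C(X, ℂ)) (hb : b ∈ θ.DC s) (g : G),
    ((mul (θ.deltaC t a ha) (θ.deltaC s b hb)) g : C(X, ℂ)) =
      if g = t * s then θ.amapC t (θ.amapC t⁻¹ a * b) else 0
  assoc : ∀ x y z, mul (mul x y) z = mul x (mul y z)

variable {G : Type*} [Group G] [DecidableEq G] {X : Type*} [TopologicalSpace X]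
  {θ : TopPartialAction G X}

/-- `J` is a two-sided ideal of the partial skew group ring `C(X) ⋆_α G`. -/
def IsSkewIdealC (S : CSkewMul θ) (J : Set θ.SkewC) : Prop :=
  (0 : θ.SkewC) ∈ J ∧ (∀ x ∈ J, ∀ y ∈ J, x + y ∈ J) ∧ (∀ x ∈ J, -x ∈ J) ∧
    (∀ x ∈ J, ∀ y : θ.SkewC, S.mul x y ∈ J ∧ S.mul y x ∈ J)

/-- The center of the partial skew group ring `C(X) ⋆_α G`. -/
def centerC (S : CSkewMul θ) : Set θ.SkewC :=
  {r | ∀ s : θ.SkewC, S.mul r s = S.mul s r}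

/-! `C(X) ⋆_α G` acts on all functions `X → ℂ`: `f ∈ C(X)` by multiplication and `δ_t` by
composition with `h t⁻¹`. The kernel of this action is a two-sided ideal, so if the ring is simple
then the action is faithful. But if `f ≠ 0` is supported in the interior of `F_t` with `t ≠ 1`, then
`f δ_1` and `f δ_t` are distinct elements acting in the same way. -/

namespace SetPartialAction

variable {G : Type*} [Group G] {X : Type*} (θ : SetPartialAction G X) {s t : G} {x : X}

theorem h_inv_mem (hx : x ∈ θ.Xt t) : θ.h t⁻¹ x ∈ θ.Xt t⁻¹ :=
  θ.h_mem t⁻¹ x (by rwa [inv_inv])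

theorem h_h_inv (hx : x ∈ θ.Xt t) : θ.h t (θ.h t⁻¹ x) = x := by
  simpa only [inv_inv] using θ.h_left_inv t⁻¹ x (by rwa [inv_inv])

theorem mem_Xt_mul (hx : x ∈ θ.Xt t) (hs : θ.h t⁻¹ x ∈ θ.Xt s) : x ∈ θ.Xt (t * s) := by
  have himage : x ∈ θ.h t '' (θ.Xt t⁻¹ ∩ θ.Xt s) := ⟨_, ⟨θ.h_inv_mem hx, hs⟩, θ.h_h_inv hx⟩
  rw [θ.h_image] at himage
  exact himage.2

theorem h_inv_h_inv (hx : x ∈ θ.Xt t) (hs : θ.h t⁻¹ x ∈ θ.Xt s) :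
    θ.h s⁻¹ (θ.h t⁻¹ x) = θ.h (t * s)⁻¹ x := by
  rw [mul_inv_rev]
  refine θ.h_comp s⁻¹ t⁻¹ x (by rwa [inv_inv]) ?_
  simpa only [inv_inv] using θ.mem_Xt_mul hx hs

/-- The set `F_t` of fixed points of `h t`, inside the domain `Xt t⁻¹`. -/
def fixedSet (t : G) : Set X :=
  {x ∈ θ.Xt t⁻¹ | θ.h t x = x}

variable {θ}

theorem mem_Xt_of_mem_fixedSet (hx : x ∈ θ.fixedSet t) : x ∈ θ.Xt t :=
  hx.2 ▸ θ.h_mem t x hx.1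

theorem h_inv_of_mem_fixedSet (hx : x ∈ θ.fixedSet t) : θ.h t⁻¹ x = x := by
  simpa only [hx.2] using θ.h_left_inv t x hx.1

end SetPartialAction

namespace TopPartialAction

section Group

variable {G : Type*} [Group G] {X : Type*} [TopologicalSpace X] {θ : TopPartialAction G X}
  {s t : G} {a b f : C(X, ℂ)}

theorem amapC_amapC_inv_mul_apply (ha : a ∈ θ.DC t) (x : X) :
    θ.amapC t (θ.amapC t⁻¹ a * b) x = a x * b (θ.h t⁻¹ x) := by
  by_cases hx : x ∈ θ.Xt t
  · simp [amapC, hx, θ.h_inv_mem hx, θ.h_h_inv hx]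
  · simp [amapC, hx, ha x hx]

theorem amapC_amapC_inv_mul_mem (ha : a ∈ θ.DC t) (hb : b ∈ θ.DC s) :
    θ.amapC t (θ.amapC t⁻¹ a * b) ∈ θ.DC (t * s) := by
  intro x hx
  rw [amapC_amapC_inv_mul_apply ha]
  by_cases hxt : x ∈ θ.Xt t
  · rw [hb _ fun hs => hx (θ.mem_Xt_mul hxt hs), mul_zero]
  · rw [ha x hxt, zero_mul]

theorem mem_DC_of_support_subset_fixedSet (hf : Function.support f ⊆ θ.fixedSet t) :
    f ∈ θ.DC t := fun _ hx =>
  Function.notMem_support.mp fun hfx => hx (SetPartialAction.mem_Xt_of_mem_fixedSet (hf hfx))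

/-- The weighted composition operator `ξ ↦ a · (ξ ∘ h t⁻¹)` on functions `X → ℂ` through which
`a δ_t` acts. The values of `h t⁻¹` off `Xt t` do not matter, as `a` vanishes there. -/
noncomputable def weightedComp (θ : TopPartialAction G X) (t : G) :
    θ.DC t →+ Module.End ℂ (X → ℂ) where
  toFun a := LinearMap.mulLeft ℂ ⇑(a : C(X, ℂ)) * LinearMap.funLeft ℂ ℂ (θ.h t⁻¹)
  map_zero' := LinearMap.ext fun _ => funext fun _ => zero_mul _
  map_add' _ _ := LinearMap.ext fun _ => funext fun _ => add_mul _ _ _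

end Group

/-- The representation of `C(X) ⋆_α G` on functions `X → ℂ` in which `C(X)` acts by multiplication
and `δ_t` by composition with `h t⁻¹`. -/
noncomputable def covariantRep (θ : TopPartialAction G X) : θ.SkewC →+ Module.End ℂ (X → ℂ) :=
  DFinsupp.liftAddHom θ.weightedComp

theorem covariantRep_deltaC {t : G} {a : C(X, ℂ)} (ha : a ∈ θ.DC t) (ξ : X → ℂ) (x : X) :
    θ.covariantRep (θ.deltaC t a ha) ξ x = a x * ξ (θ.h t⁻¹ x) :=
  congr($(DFinsupp.liftAddHom_apply_single θ.weightedComp t ⟨a, ha⟩) ξ x)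

theorem covariantRep_deltaC0 (f : C(X, ℂ)) (ξ : X → ℂ) (x : X) :
    θ.covariantRep (θ.deltaC0 f) ξ x = f x * ξ x := by
  refine (covariantRep_deltaC _ ξ x).trans ?_
  rw [inv_one, θ.h_one]

theorem covariantRep_ne_zero [Nonempty X] (θ : TopPartialAction G X) : θ.covariantRep ≠ 0 := by
  have hone : θ.covariantRep (θ.deltaC0 1) = 1 :=
    LinearMap.ext fun ξ => funext fun x => (covariantRep_deltaC0 1 ξ x).trans (one_mul _)
  intro hzero
  rw [hzero, AddMonoidHom.zero_apply] at hone
  exact zero_ne_one hone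

theorem covariantRep_deltaC_eq_deltaC0 {t : G} {f : C(X, ℂ)}
    (hf : Function.support f ⊆ θ.fixedSet t) :
    θ.covariantRep (θ.deltaC t f (mem_DC_of_support_subset_fixedSet hf)) =
      θ.covariantRep (θ.deltaC0 f) := by
  refine LinearMap.ext fun ξ => funext fun x => ?_
  rw [covariantRep_deltaC, covariantRep_deltaC0]
  by_cases hfx : f x = 0
  · rw [hfx, zero_mul, zero_mul]
  · rw [SetPartialAction.h_inv_of_mem_fixedSet (hf hfx)]

theorem eq_zero_of_deltaC_eq_deltaC0 {t : G} (ht : t ≠ 1) {f : C(X, ℂ)} {hf : f ∈ θ.DC t}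
    (h : θ.deltaC t f hf = θ.deltaC0 f) : f = 0 := by
  rcases (DFinsupp.single_eq_single_iff ..).mp h with ⟨ht1, -⟩ | ⟨hf0, -⟩
  · exact absurd ht1 ht
  · exact congrArg Subtype.val hf0

end TopPartialAction

theorem exists_continuousMap_support_subset [CompletelyRegularSpace X] {U : Set X}
    (hU : IsOpen U) {x : X} (hx : x ∈ U) :
    ∃ f : C(X, ℂ), f ≠ 0 ∧ Function.support f ⊆ U := by
  obtain ⟨g, hg, hgx, hgU⟩ := CompletelyRegularSpace.completely_regular_isOpen x U hU hx
  refine ⟨⟨fun y => 1 - ((g y : ℝ) : ℂ), by fun_prop⟩, fun h => ?_, fun y hy => ?_⟩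
  · simpa [hgx] using DFunLike.congr_fun h x
  · by_contra hyU
    exact hy (by simp [hgU hyU])

theorem TopPartialAction.topologicallyFree_of_covariantRep_injective [CompletelyRegularSpace X]
    (h : Function.Injective θ.covariantRep) : θ.TopologicallyFree := by
  intro t ht
  by_contra hne
  obtain ⟨x, hx⟩ := Set.nonempty_iff_ne_empty.mpr hne
  obtain ⟨f, hf, hsupp⟩ := exists_continuousMap_support_subset isOpen_interior hx
  have hfix : Function.support f ⊆ θ.fixedSet t := hsupp.trans interior_subset
  exact hf (eq_zero_of_deltaC_eq_deltaC0 ht (h (covariantRep_deltaC_eq_deltaC0 hfix)))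

namespace CSkewMul

variable (S : CSkewMul θ)

theorem mul_deltaC {s t : G} {a b : C(X, ℂ)} (ha : a ∈ θ.DC t) (hb : b ∈ θ.DC s) :
    S.mul (θ.deltaC t a ha) (θ.deltaC s b hb) =
      θ.deltaC (t * s) _ (TopPartialAction.amapC_amapC_inv_mul_mem ha hb) := by
  refine DFinsupp.ext fun g => Subtype.ext ?_
  rw [S.mul_single, TopPartialAction.deltaC]
  split_ifs with hg
  · rw [hg, DFinsupp.single_eq_same]
  · rw [DFinsupp.single_eq_of_ne hg, ZeroMemClass.coe_zero]

/-- Left multiplication by `x` in `C(X) ⋆_α G` as an additive homomorphism. -/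
noncomputable def mulLeft (x : θ.SkewC) : θ.SkewC →+ θ.SkewC :=
  AddMonoidHom.mk' (S.mul x) (S.left_distrib x)

/-- Right multiplication by `y` in `C(X) ⋆_α G` as an additive homomorphism. -/
noncomputable def mulRight (y : θ.SkewC) : θ.SkewC →+ θ.SkewC :=
  AddMonoidHom.mk' (S.mul · y) fun x z => S.right_distrib x z y

theorem map_mul_of_deltaC {R : Type*} [NonUnitalNonAssocSemiring R] (φ : θ.SkewC →+ R)
    (h : ∀ (t s : G) (a b : C(X, ℂ)) (ha : a ∈ θ.DC t) (hb : b ∈ θ.DC s),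
      φ (S.mul (θ.deltaC t a ha) (θ.deltaC s b hb)) =
        φ (θ.deltaC t a ha) * φ (θ.deltaC s b hb)) (x y : θ.SkewC) :
    φ (S.mul x y) = φ x * φ y := by
  have hleft (t : G) (a : C(X, ℂ)) (ha : a ∈ θ.DC t) :
      φ.comp (S.mulLeft (θ.deltaC t a ha)) =
        (AddMonoidHom.mulLeft (φ (θ.deltaC t a ha))).comp φ :=
    DFinsupp.addHom_ext fun s b => h t s a b ha b.2
  have hright : φ.comp (S.mulRight y) = (AddMonoidHom.mulRight (φ y)).comp φ :=
    DFinsupp.addHom_ext fun t a => congr($(hleft t a a.2) y)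
  exact congr($hright x)

theorem covariantRep_mul (x y : θ.SkewC) :
    θ.covariantRep (S.mul x y) = θ.covariantRep x * θ.covariantRep y := by
  refine S.map_mul_of_deltaC θ.covariantRep (fun t s a b ha hb => ?_) x y
  refine LinearMap.ext fun ξ => funext fun x => ?_
  rw [S.mul_deltaC, Module.End.mul_apply]
  simp only [TopPartialAction.covariantRep_deltaC,
    TopPartialAction.amapC_amapC_inv_mul_apply ha, mul_assoc]
  by_cases hx : x ∈ θ.Xt t
  · by_cases hs : θ.h t⁻¹ x ∈ θ.Xt s
    · rw [θ.h_inv_h_inv hx hs]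
    · rw [hb _ hs, zero_mul, zero_mul]
  · rw [ha x hx, zero_mul, zero_mul]

theorem isSkewIdealC_ker {R : Type*} [NonUnitalNonAssocSemiring R] (φ : θ.SkewC →+ R)
    (hφ : ∀ x y, φ (S.mul x y) = φ x * φ y) : IsSkewIdealC S (φ.ker : Set θ.SkewC) := by
  refine ⟨zero_mem _, fun _ hx _ hy => add_mem hx hy, fun _ hx => neg_mem hx, ?_⟩
  intro x hx y
  have hφx : φ x = 0 := φ.mem_ker.mp hx
  exact ⟨φ.mem_ker.mpr (by rw [hφ, hφx, zero_mul]), φ.mem_ker.mpr (by rw [hφ, hφx, mul_zero])⟩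

theorem injective_of_simple
    (hsimple : ∀ J : Set θ.SkewC, IsSkewIdealC S J → J = {0} ∨ J = Set.univ)
    {R : Type*} [NonUnitalNonAssocSemiring R] (φ : θ.SkewC →+ R)
    (hφ : ∀ x y, φ (S.mul x y) = φ x * φ y) (hne : φ ≠ 0) : Function.Injective φ := by
  rcases hsimple _ (S.isSkewIdealC_ker φ hφ) with hker | hker
  · exact φ.ker_eq_bot_iff.mp (SetLike.coe_injective hker)
  · exact absurd (AddMonoidHom.ext fun x => φ.mem_ker.mp (hker.ge (Set.mem_univ x))) hne

end CSkewMul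

theorem topFree_of_simple_general [CompletelyRegularSpace X] (S : CSkewMul θ)
    (hsimple : ∀ J : Set θ.SkewC, IsSkewIdealC S J → J = {0} ∨ J = Set.univ) :
    θ.TopologicallyFree := by
  cases isEmpty_or_nonempty X
  · exact fun _ _ => Set.eq_empty_of_isEmpty _
  · exact TopPartialAction.topologicallyFree_of_covariantRep_injective <|
      S.injective_of_simple hsimple θ.covariantRep S.covariantRep_mul θ.covariantRep_ne_zero

theorem topFree_of_simple
    {G' : Type*} [CommGroup G'] [DecidableEq G'] {Y : Type*} [TopologicalSpace Y]
    [CompactSpace Y] [T2Space Y]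
    (θ' : TopPartialAction G' Y) (S : CSkewMul θ')
    (hsimple : ∀ J : Set θ'.SkewC, IsSkewIdealC S J → J = {0} ∨ J = Set.univ) :
    θ'.TopologicallyFree :=
  topFree_of_simple_general S hsimple
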